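/- The quadratic form q(x₁,x₂,x₃,x₄) = −α x₁² − β x₂² − c x₂x₃ − x₃² − d x₁x₄ + x₃x₄ − x₄² with α, β > 0 is negative semidefinite whenever c² ≤ 2β and d² ≤ 2α. (In particular the paper's sufficient conditions b ≤ 2η_B, 2η_I, 4φ_B, 4φ̄ with c = b/(2η_I), d = b/(2η_B), α = φ_B/η_B, β = φ̄/η_I imply these hypotheses.) -/

import Mathlib

/-!
Twice the negated form splits as
`(2α x₁² + 2d x₁x₄ + x₄²) + (2β x₂² + 2c x₂x₃ + x₃²) + (x₃ - x₄)²`.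
The hypotheses on `c` and `d` say exactly that the two binary forms have nonpositive discriminant.
-/

section OrderedRing

variable {R : Type*} [CommRing R] [LinearOrder R] [IsStrictOrderedRing R]

theorem binary_quadratic_nonneg_of_sq_le_mul {a b e : R} (he : 0 < e) (h : b ^ 2 ≤ a * e)
    (x y : R) : 0 ≤ a * x ^ 2 + 2 * b * x * y + e * y ^ 2 := by
  have complete_square : e * (a * x ^ 2 + 2 * b * x * y + e * y ^ 2) =
      (a * e - b ^ 2) * x ^ 2 + (b * x + e * y) ^ 2 := by ring
  refine nonneg_of_mul_nonneg_right ?_ he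
  rw [complete_square]
  exact add_nonneg (mul_nonneg (sub_nonneg.mpr h) (sq_nonneg x)) (sq_nonneg _)

theorem stmt_14_general {α β c d : R} (hc : c ^ 2 ≤ 2 * β) (hd : d ^ 2 ≤ 2 * α)
    (x₁ x₂ x₃ x₄ : R) :
    -α * x₁ ^ 2 - β * x₂ ^ 2 - c * x₂ * x₃ - x₃ ^ 2 - d * x₁ * x₄ + x₃ * x₄ - x₄ ^ 2 ≤ 0 := by
  have form₁₄_nonneg : 0 ≤ 2 * α * x₁ ^ 2 + 2 * d * x₁ * x₄ + 1 * x₄ ^ 2 :=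
    binary_quadratic_nonneg_of_sq_le_mul one_pos (by rwa [mul_one]) x₁ x₄
  have form₂₃_nonneg : 0 ≤ 2 * β * x₂ ^ 2 + 2 * c * x₂ * x₃ + 1 * x₃ ^ 2 :=
    binary_quadratic_nonneg_of_sq_le_mul one_pos (by rwa [mul_one]) x₂ x₃
  have cross_term_le : 2 * x₃ * x₄ ≤ x₃ ^ 2 + x₄ ^ 2 := two_mul_le_add_sq x₃ x₄
  linarith

end OrderedRing

/-- The quadratic form
`q(x₁,x₂,x₃,x₄) = −α x₁² − β x₂² − c x₂x₃ − x₃² − d x₁x₄ + x₃x₄ − x₄²`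
with `α, β > 0` is negative semidefinite whenever `c² ≤ 2β` and `d² ≤ 2α`. -/
theorem stmt_14 (α β c d : ℝ) (hα : 0 < α) (hβ : 0 < β)
    (hc : c ^ 2 ≤ 2 * β) (hd : d ^ 2 ≤ 2 * α) :
    ∀ x₁ x₂ x₃ x₄ : ℝ,
      -α * x₁ ^ 2 - β * x₂ ^ 2 - c * x₂ * x₃ - x₃ ^ 2
        - d * x₁ * x₄ + x₃ * x₄ - x₄ ^ 2 ≤ 0 :=
  stmt_14_general hc hd
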